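/- Let ℓ = 163 and let L be the unique degree-3 intermediate field of ℚ(ζ_ℓ)/ℚ. Then the class number of L is 4, and the ideal class group of L is isomorphic to (ℤ/2ℤ) × (ℤ/2ℤ). -/

import Mathlib

instance (ℓ : ℕ+) : FiniteDimensional ℚ (CyclotomicField ℓ ℚ) :=
  haveI : IsCyclotomicExtension {(ℓ : ℕ)} ℚ (CyclotomicField ℓ ℚ) :=
    CyclotomicField.isCyclotomicExtension _ _
  IsCyclotomicExtension.finiteDimensional {(ℓ : ℕ)} ℚ _

instance (ℓ : ℕ+) (L : IntermediateField ℚ (CyclotomicField ℓ ℚ)) : NumberField L := ⟨⟩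

open Polynomial


section generic
variable {R S : Type*} [CommRing R] [CommRing S] [Algebra R S]

theorem c163_leftMul (b : Module.Basis (Fin 3) R S) (t : S) (p q s : R)
    (hb : ∀ i, b i = t ^ (i : ℕ))
    (ht : t ^ 3 = algebraMap R S p * t ^ 2 + algebraMap R S q * t + algebraMap R S s) (x y z : R) :
    Algebra.leftMulMatrix b (algebraMap R S x + algebraMap R S y * t + algebraMap R S z * t ^ 2) =
      !![x, z * s, y * s + z * p * s;
         y, x + z * q, y * q + z * (p * q + s);
         z, y + z * p, x + y * p + z * (p ^ 2 + q)] := by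
  have h0 : b 0 = 1 := by simp [hb]
  have h1 : b 1 = t := by simp [hb]
  have h2 : b 2 = t ^ 2 := by simp [hb]
  have key : ∀ (w : S) (u : Fin 3 → R), w = algebraMap R S (u 0) + algebraMap R S (u 1) * t
      + algebraMap R S (u 2) * t ^ 2 → ∀ i, b.repr w i = u i := by
    intro w u hw i
    have : w = ∑ i, u i • b i := by
      rw [Fin.sum_univ_three, h0, h1, h2, hw]; simp [Algebra.smul_def]
    rw [this, Module.Basis.repr_sum_self]
  ext i j
  rw [Algebra.leftMulMatrix_eq_repr_mul]
  fin_cases j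
  · rw [key _ ![x, y, z] (by simp [h0])]
    fin_cases i <;> simp
  · rw [key _ ![z * s, x + z * q, y + z * p]]
    · fin_cases i <;> simp
    · simp [h1]; linear_combination algebraMap R S z * ht
  · rw [key _ ![y * s + z * p * s, y * q + z * (p * q + s) + x - x, x + y * p + z * (p ^ 2 + q)]]
    · fin_cases i <;> simp
    · simp [h2]
      linear_combination (algebraMap R S y + algebraMap R S z * t + algebraMap R S z * algebraMap R S p) * ht

theorem c163_discr (b : Module.Basis (Fin 3) R S) (t : S) (p q s : R)
    (hb : ∀ i, b i = t ^ (i : ℕ))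
    (ht : t ^ 3 = algebraMap R S p * t ^ 2 + algebraMap R S q * t + algebraMap R S s) :
    Algebra.discr R b = p ^ 2 * q ^ 2 + 4 * q ^ 3 - 4 * p ^ 3 * s - 27 * s ^ 2 - 18 * p * q * s := by
  have tr : ∀ x y z : R, Algebra.trace R S (algebraMap R S x + algebraMap R S y * t +
      algebraMap R S z * t ^ 2) = 3 * x + y * p + z * (p ^ 2 + 2 * q) := by
    intro x y z
    rw [Algebra.trace_eq_matrix_trace b, c163_leftMul b t p q s hb ht, Matrix.trace_fin_three]
    simp; ring
  have t0 : Algebra.trace R S 1 = 3 := by simpa using tr 1 0 0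
  have t1 : Algebra.trace R S t = p := by simpa using tr 0 1 0
  have t2 : Algebra.trace R S (t ^ 2) = p ^ 2 + 2 * q := by simpa using tr 0 0 1
  have t3 : Algebra.trace R S (t ^ 3) = 3 * s + q * p + p * (p ^ 2 + 2 * q) := by
    rw [← tr, ht]; congr 1; ring
  have t4 : Algebra.trace R S (t ^ 4) = 3 * (p * s) + (p * q + s) * p + (p ^ 2 + q) * (p ^ 2 + 2 * q) := by
    rw [← tr]; congr 1; simp; linear_combination (t + algebraMap R S p) * ht
  rw [Algebra.discr_def, Matrix.det_fin_three]
  simp only [Algebra.traceMatrix_apply, Algebra.traceForm_apply, hb, ← pow_add]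
  norm_num [t0, t1, t2, t3, t4]
  ring

theorem c163_norm (b : Module.Basis (Fin 3) R S) (t : S) (p q s : R)
    (hb : ∀ i, b i = t ^ (i : ℕ))
    (ht : t ^ 3 = algebraMap R S p * t ^ 2 + algebraMap R S q * t + algebraMap R S s) (x y z : R) :
    Algebra.norm R (algebraMap R S x + algebraMap R S y * t + algebraMap R S z * t ^ 2) =
      Matrix.det !![x, z * s, y * s + z * p * s;
         y, x + z * q, y * q + z * (p * q + s);
         z, y + z * p, x + y * p + z * (p ^ 2 + q)] := by
  rw [Algebra.norm_eq_matrix_det b, c163_leftMul b t p q s hb ht]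
end generic

section fld
variable {K : Type*} [Field K] [NumberField K]
open NumberField

theorem c163_eis (β : K) (h : β ^ 3 + 163 * β ^ 2 + 8802 * β + 157295 = 0) :
    minpoly ℤ β = X ^ 3 + 163 * X ^ 2 + 8802 * X + 157295 ∧
    (minpoly ℤ β).IsEisensteinAt (Submodule.span ℤ {(163 : ℤ)}) ∧ IsIntegral ℤ β ∧
    minpoly ℚ β = X ^ 3 + 163 * X ^ 2 + 8802 * X + 157295 := by
  have hdeg : (X ^ 3 + 163 * X ^ 2 + 8802 * X + 157295 : ℤ[X]).natDegree = 3 := by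
    compute_degree!
  have hmon : (X ^ 3 + 163 * X ^ 2 + 8802 * X + 157295 : ℤ[X]).Monic := by
    monicity!
  have hp : Prime (163 : ℤ) := by
    rw [Int.prime_iff_natAbs_prime]; norm_num
  have heis : (X ^ 3 + 163 * X ^ 2 + 8802 * X + 157295 : ℤ[X]).IsEisensteinAt
      (Submodule.span ℤ {(163 : ℤ)}) := by
    refine ⟨?_, ?_, ?_⟩
    · rw [hmon.leadingCoeff]
      change (1 : ℤ) ∉ Ideal.span {163}
      rw [Ideal.mem_span_singleton]; norm_num
    · intro n hn
      rw [hdeg] at hn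
      change _ ∈ Ideal.span _
      rw [Ideal.mem_span_singleton]
      interval_cases n <;> simp [coeff_X, coeff_ofNat_mul, coeff_X_pow, coeff_ofNat_succ, coeff_ofNat_zero]
    · change _ ∉ Ideal.span {_} ^ 2
      rw [Ideal.span_singleton_pow, Ideal.mem_span_singleton]
      norm_num [coeff_ofNat_zero]
  have hirr : Irreducible (X ^ 3 + 163 * X ^ 2 + 8802 * X + 157295 : ℤ[X]) :=
    heis.irreducible ((Ideal.span_singleton_prime hp.ne_zero).2 hp) hmon.isPrimitive (by rw [hdeg]; norm_num)
  have hint : IsIntegral ℤ β := ⟨_, hmon, by simpa using h⟩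
  have hQ : minpoly ℚ β = X ^ 3 + 163 * X ^ 2 + 8802 * X + 157295 := by
    have h2 := (hmon.irreducible_iff_irreducible_map_fraction_map (K := ℚ)).1 hirr
    have := minpoly.eq_of_irreducible_of_monic h2 (x := β) (by simpa [map_ofNat] using h) (hmon.map _)
    rw [← this]; simp
  have hZ : minpoly ℤ β = X ^ 3 + 163 * X ^ 2 + 8802 * X + 157295 := by
    have h₁ := minpoly.isIntegrallyClosed_eq_field_fractions' ℚ hint
    apply map_injective (algebraMap ℤ ℚ) (algebraMap ℤ ℚ).injective_int
    rw [← h₁, hQ]; simp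
  exact ⟨hZ, hZ ▸ heis, hint, hQ⟩

theorem c163_finrank (β : K) (h : β ^ 3 + 163 * β ^ 2 + 8802 * β + 157295 = 0) :
    Module.finrank ℚ (IntermediateField.adjoin ℚ {β}) = 3 := by
  obtain ⟨_, _, h3, h4⟩ := c163_eis β h
  rw [IntermediateField.adjoin.finrank h3.tower_top, h4]
  compute_degree!

theorem c163_adjoin (h3 : Module.finrank ℚ K = 3) (β : K)
    (h : β ^ 3 + 163 * β ^ 2 + 8802 * β + 157295 = 0) (z : K) (hz : IsIntegral ℤ z) :
    z ∈ Algebra.adjoin ℤ {β} := by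
  obtain ⟨hZ, he, hi, hQ⟩ := c163_eis β h
  have htop : IntermediateField.adjoin ℚ {β} = ⊤ := by
    apply IntermediateField.eq_of_le_of_finrank_eq le_top
    rw [c163_finrank β h, IntermediateField.finrank_top', h3]
  have htop' : Algebra.adjoin ℚ {β} = ⊤ := by
    rw [← IntermediateField.adjoin_simple_toSubalgebra_of_isAlgebraic (hi.tower_top (A := ℚ)).isAlgebraic, htop]
    rfl
  obtain ⟨B, hB, hB3⟩ : ∃ B : PowerBasis ℚ K, B.gen = β ∧ B.dim = 3 := by
    refine ⟨PowerBasis.ofAdjoinEqTop' (hi.tower_top (A := ℚ)) htop', by simp, ?_⟩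
    rw [PowerBasis.ofAdjoinEqTop'_dim, hQ]; compute_degree!
  subst hB
  have H := Algebra.discr_mul_isIntegral_mem_adjoin ℚ hi hz
  have hd : Algebra.discr ℚ B.basis = 163 ^ 2 := by
    have := c163_discr (B.basis.reindex (finCongr hB3)) B.gen (-163) (-8802) (-157295 : ℚ) (by
      intro i; simp) (by simp; linear_combination h)
    rw [Module.Basis.coe_reindex, Algebra.discr_reindex] at this
    rw [this]; norm_num
  rw [hd] at H
  refine mem_adjoin_of_smul_prime_pow_smul_of_minpoly_isEisensteinAt (p := (163 : ℤ)) (n := 2) ?_ hi hz ?_ he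
  · rw [Int.prime_iff_natAbs_prime]; norm_num
  · convert H using 1
    simp [Algebra.smul_def]; norm_num

theorem c163_adjoin' (h3 : Module.finrank ℚ K = 3) (θ : 𝓞 K) (h : θ ^ 3 = 11 * θ ^ 2 + 14 * θ + 1) :
    Algebra.adjoin ℤ {θ} = ⊤ := by
  rw [eq_top_iff]
  rintro z -
  have hK : ((θ : K)) ^ 3 = 11 * (θ : K) ^ 2 + 14 * θ + 1 := by
    have := congrArg (algebraMap (𝓞 K) K) h
    simpa [map_ofNat] using this
  have h1 := c163_adjoin h3 ((θ : K) - 58) (by linear_combination hK) z z.isIntegral_coe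
  have h2 : (z : K) ∈ Algebra.adjoin ℤ {(θ : K)} := by
    refine Algebra.adjoin_le ?_ h1
    simp only [Set.singleton_subset_iff, SetLike.mem_coe]
    exact Subalgebra.sub_mem _ (Algebra.self_mem_adjoin_singleton ℤ _) (ofNat_mem _ 58)
  rw [Algebra.adjoin_singleton_eq_range_aeval] at h2 ⊢
  obtain ⟨g, hg⟩ := h2
  refine ⟨g, ?_⟩
  apply RingOfIntegers.coe_injective
  refine Eq.trans ?_ hg
  change algebraMap (𝓞 K) K (aeval θ g) = aeval (algebraMap (𝓞 K) K θ) g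
  rw [aeval_algebraMap_apply]

/-- data -/
theorem c163_basis (h3 : Module.finrank ℚ K = 3) (θ : 𝓞 K) (h : θ ^ 3 = 11 * θ ^ 2 + 14 * θ + 1) :
    ∃ b : Module.Basis (Fin 3) ℤ (𝓞 K), (∀ i, b i = θ ^ (i : ℕ)) := by
  let B := PowerBasis.ofAdjoinEqTop' (Algebra.IsIntegral.isIntegral (R := ℤ) θ) (c163_adjoin' h3 θ h)
  have hB : B.gen = θ := by simp [B]
  have hd : B.dim = 3 := by
    rw [← B.finrank, RingOfIntegers.rank, h3]
  exact ⟨B.basis.reindex (finCongr hd), fun i => by simp [hB]⟩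

theorem c163_hom (h3 : Module.finrank ℚ K = 3) (θ : 𝓞 K) (h : θ ^ 3 = 11 * θ ^ 2 + 14 * θ + 1)
    (n : ℕ) (r : ZMod n) (hr : r ^ 3 = 11 * r ^ 2 + 14 * r + 1) :
    ∃ φ : 𝓞 K →+* ZMod n, φ θ = r := by
  let B := PowerBasis.ofAdjoinEqTop' (Algebra.IsIntegral.isIntegral (R := ℤ) θ) (c163_adjoin' h3 θ h)
  have hB : B.gen = θ := by simp [B]
  have hd : B.dim = 3 := by
    rw [← B.finrank, RingOfIntegers.rank, h3]
  have hm : minpoly ℤ B.gen = X ^ 3 - 11 * X ^ 2 - 14 * X - 1 := by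
    refine Eq.symm (eq_of_monic_of_dvd_of_natDegree_le (minpoly.monic B.isIntegral_gen) (by monicity!) (minpoly.isIntegrallyClosed_dvd B.isIntegral_gen ?_) ?_)
    · simp [hB, map_ofNat]; linear_combination h
    · rw [B.natDegree_minpoly, hd]; compute_degree
  refine ⟨(B.lift r ?_).toRingHom, ?_⟩
  · rw [hm]; simp [map_ofNat]; linear_combination hr
  · have := B.lift_gen r (by rw [hm]; simp [map_ofNat]; linear_combination hr)
    exact (congrArg _ hB.symm).trans this

theorem c163_hom_ext (h3 : Module.finrank ℚ K = 3) (θ : 𝓞 K) (h : θ ^ 3 = 11 * θ ^ 2 + 14 * θ + 1)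
    {T : Type*} [Ring T] (φ ψ : 𝓞 K →+* T) (hh : φ θ = ψ θ) : φ = ψ := by
  have : φ.toIntAlgHom = ψ.toIntAlgHom := by
    apply AlgHom.ext_of_adjoin_eq_top (c163_adjoin' h3 θ h)
    intro x hx
    simp at hx; subst hx; exact hh
  ext x
  exact DFunLike.congr_fun this x

theorem c163_discrK (h3 : Module.finrank ℚ K = 3) (θ : 𝓞 K) (h : θ ^ 3 = 11 * θ ^ 2 + 14 * θ + 1) :
    discr K = 163 ^ 2 := by
  obtain ⟨b, hb⟩ := c163_basis h3 θ h
  rw [← discr_eq_discr K b, c163_discr b θ 11 14 1 hb (by simpa using h)]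
  norm_num

theorem c163_absNorm (h3 : Module.finrank ℚ K = 3) (θ : 𝓞 K) (h : θ ^ 3 = 11 * θ ^ 2 + 14 * θ + 1)
    (x y z : ℤ) : Ideal.absNorm (Ideal.span {(x + y * θ + z * θ ^ 2 : 𝓞 K)}) =
    (x * ((x + z * 14) * (x + y * 11 + z * 135) - (y * 14 + z * 155) * (y + z * 11))
     - z * (y * (x + y * 11 + z * 135) - (y * 14 + z * 155) * z)
     + (y + z * 11) * (y * (y + z * 11) - (x + z * 14) * z)).natAbs := by
  obtain ⟨b, hb⟩ := c163_basis h3 θ h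
  rw [Ideal.absNorm_span_singleton]
  have := c163_norm b θ 11 14 1 hb (by simpa using h) x y z
  simp only [algebraMap_int_eq, eq_intCast] at this
  rw [this, Matrix.det_fin_three]
  simp; ring_nf

theorem c163_mink (h3 : Module.finrank ℚ K = 3) (θ : 𝓞 K) (h : θ ^ 3 = 11 * θ ^ 2 + 14 * θ + 1)
    (C : ClassGroup (𝓞 K)) : ∃ I : nonZeroDivisors (Ideal (𝓞 K)), ClassGroup.mk0 I = C ∧
      Ideal.absNorm (I : Ideal (𝓞 K)) ≤ 36 := by
  obtain ⟨I, hI, hn⟩ := exists_ideal_in_class_of_norm_le C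
  refine ⟨I, hI, ?_⟩
  have hd := c163_discrK h3 θ h
  have hr : InfinitePlace.nrComplexPlaces K = 0 := by
    have h1 := sign_discr K
    have h2 := InfinitePlace.card_add_two_mul_card_eq_rank K
    rw [h3] at h2
    rw [hd] at h1
    have : InfinitePlace.nrComplexPlaces K ≤ 1 := by omega
    interval_cases hc : InfinitePlace.nrComplexPlaces K
    · rfl
    · norm_num at h1
  rw [hr, hd, h3] at hn
  have h4 : √(|((163 ^ 2 : ℤ) : ℝ)|) = 163 := by
    rw [Real.sqrt_eq_iff_mul_self_eq] <;> norm_num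
  rw [h4] at hn
  norm_num [Nat.factorial] at hn
  have : (Ideal.absNorm (I : Ideal (𝓞 K)) : ℝ) < 37 := by linarith
  have : Ideal.absNorm (I : Ideal (𝓞 K)) < 37 := by exact_mod_cast this
  omega
end fld

section ideals
open NumberField
variable {K : Type*} [Field K] [NumberField K]

/-- the class of `I` lies in `V` -/
def C163S (V : Subgroup (ClassGroup (𝓞 K))) (I : Ideal (𝓞 K)) : Prop :=
  ∃ hI : I ∈ nonZeroDivisors (Ideal (𝓞 K)), ClassGroup.mk0 ⟨I, hI⟩ ∈ V

theorem C163S.mul {V : Subgroup (ClassGroup (𝓞 K))} {I J : Ideal (𝓞 K)} (hI : C163S V I)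
    (hJ : C163S V J) : C163S V (I * J) := by
  obtain ⟨h1, h2⟩ := hI
  obtain ⟨h3, h4⟩ := hJ
  refine ⟨mul_mem h1 h3, ?_⟩
  have := V.mul_mem h2 h4
  rwa [← map_mul] at this

theorem C163S.of_mul {V : Subgroup (ClassGroup (𝓞 K))} {I J : Ideal (𝓞 K)} (hIJ : C163S V (I * J))
    (hJ : C163S V J) : C163S V I := by
  obtain ⟨h1, h2⟩ := hIJ
  obtain ⟨h3, h4⟩ := hJ
  have h5 : I ∈ nonZeroDivisors (Ideal (𝓞 K)) := by
    rw [mem_nonZeroDivisors_iff_ne_zero] at h1 ⊢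
    exact left_ne_zero_of_mul h1
  refine ⟨h5, ?_⟩
  have e : ClassGroup.mk0 ⟨I * J, h1⟩ = ClassGroup.mk0 ⟨I, h5⟩ * ClassGroup.mk0 ⟨J, h3⟩ := by
    rw [← map_mul]; rfl
  rw [e] at h2
  exact (V.mul_mem_cancel_right h4).1 h2

theorem C163S.principal (V : Subgroup (ClassGroup (𝓞 K))) {a : 𝓞 K} (ha : a ≠ 0) :
    C163S V (Ideal.span {a}) := by
  have h : Ideal.span {a} ∈ nonZeroDivisors (Ideal (𝓞 K)) := by
    rw [mem_nonZeroDivisors_iff_ne_zero]; simpa using ha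
  refine ⟨h, ?_⟩
  rw [(ClassGroup.mk0_eq_one_iff h).2 ⟨a, rfl⟩]
  exact V.one_mem

theorem C163S.top (V : Subgroup (ClassGroup (𝓞 K))) : C163S V (⊤ : Ideal (𝓞 K)) := by
  rw [← Ideal.span_singleton_one]
  exact C163S.principal V one_ne_zero

theorem c163_ker_of_norm {P : Ideal (𝓞 K)} {p : ℕ} (hp : p.Prime) (hP : Ideal.absNorm P = p) :
    ∃ φ : 𝓞 K →+* ZMod p, RingHom.ker φ = P := by
  have hc : Nat.card (𝓞 K ⧸ P) = p := by
    rw [← hP, Ideal.absNorm_apply, Submodule.cardQuot_apply]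
  have : Finite (𝓞 K ⧸ P) := Nat.finite_of_card_ne_zero (by rw [hc]; exact hp.ne_zero)
  have := Fintype.ofFinite (𝓞 K ⧸ P)
  let e := ZMod.ringEquivOfPrime (𝓞 K ⧸ P) hp (by rw [← Nat.card_eq_fintype_card, hc])
  refine ⟨e.symm.toRingHom.comp (Ideal.Quotient.mk P), ?_⟩
  ext x
  simp [RingHom.mem_ker, Ideal.Quotient.eq_zero_iff_mem]

theorem c163_norm_ker {p : ℕ} (φ : 𝓞 K →+* ZMod p) : Ideal.absNorm (RingHom.ker φ) = p := by
  rw [Ideal.absNorm_apply, Submodule.cardQuot_apply]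
  rw [Nat.card_congr (RingHom.quotientKerEquivOfSurjective (ZMod.ringHom_surjective φ)).toEquiv,
    Nat.card_zmod]

def C163G (V : Subgroup (ClassGroup (𝓞 K))) (p : ℕ) : Prop :=
  ∀ φ : 𝓞 K →+* ZMod p, C163S V (RingHom.ker φ)

theorem c163_prime_mem {P : Ideal (𝓞 K)} (hP : P.IsPrime) (n : ℕ) (hn : n ≠ 0)
    (h : (n : 𝓞 K) ∈ P) : ∃ p : ℕ, p.Prime ∧ p ∣ n ∧ (p : 𝓞 K) ∈ P := by
  induction n using Nat.recOnMul with
  | zero => exact absurd rfl hn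
  | one => exact absurd ((Ideal.eq_top_iff_one P).2 (by simpa using h)) hP.ne_top
  | prime p hp => exact ⟨p, hp, dvd_rfl, h⟩
  | mul a b iha ihb =>
    push_cast at h
    rcases hP.mem_or_mem h with h | h
    · obtain ⟨p, h1, h2, h3⟩ := iha (left_ne_zero_of_mul hn) h
      exact ⟨p, h1, h2.mul_right _, h3⟩
    · obtain ⟨p, h1, h2, h3⟩ := ihb (right_ne_zero_of_mul hn) h
      exact ⟨p, h1, h2.mul_left _, h3⟩

theorem c163_norm_nat (h3 : Module.finrank ℚ K = 3) (p : ℕ) :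
    Ideal.absNorm (Ideal.span {(p : 𝓞 K)}) = p ^ 3 := by
  rw [Ideal.absNorm_span_natCast, RingOfIntegers.rank, h3]

theorem c163_prime_good (h3 : Module.finrank ℚ K = 3) (V : Subgroup (ClassGroup (𝓞 K))) {p : ℕ}
    (hp : p.Prime) (hG : C163G V p) {P : Ideal (𝓞 K)} (hP : P.IsPrime) (hpP : (p : 𝓞 K) ∈ P) :
    C163S V P := by
  have hp0 : (p : 𝓞 K) ≠ 0 := by exact_mod_cast hp.ne_zero
  obtain ⟨J, hJ⟩ : P ∣ Ideal.span {(p : 𝓞 K)} := by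
    rw [Ideal.dvd_iff_le, Ideal.span_singleton_le_iff_mem]; exact hpP
  have hN := c163_norm_nat h3 p
  rw [hJ, map_mul] at hN
  have hS : C163S V (P * J) := hJ ▸ C163S.principal V hp0
  obtain ⟨i, hi, hi'⟩ := (Nat.dvd_prime_pow hp).1 (Dvd.intro _ hN)
  interval_cases i
  · rw [pow_zero, Ideal.absNorm_eq_one_iff] at hi'
    exact absurd hi' hP.ne_top
  · rw [pow_one] at hi'
    obtain ⟨φ, rfl⟩ := c163_ker_of_norm hp hi'
    exact hG φ
  · rw [hi', pow_succ] at hN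
    have : Ideal.absNorm J = p := Nat.eq_of_mul_eq_mul_left (pow_pos hp.pos 2) hN
    obtain ⟨φ, rfl⟩ := c163_ker_of_norm hp this
    exact hS.of_mul (hG φ)
  · rw [hi'] at hN
    have : Ideal.absNorm J = 1 := Nat.eq_of_mul_eq_mul_left (pow_pos hp.pos 3) (by rw [hN, mul_one])
    rw [Ideal.absNorm_eq_one_iff] at this
    subst this
    exact hS.of_mul (C163S.top V)

theorem c163_good_of_norm (h3 : Module.finrank ℚ K = 3) (V : Subgroup (ClassGroup (𝓞 K)))
    (I : Ideal (𝓞 K)) (hI : I ≠ 0)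
    (h : ∀ p : ℕ, p.Prime → p ∣ Ideal.absNorm I → C163G V p) : C163S V I := by
  induction I using UniqueFactorizationMonoid.induction_on_prime with
  | h₁ => exact absurd rfl hI
  | h₂ I hu => rw [Ideal.isUnit_iff] at hu; subst hu; exact C163S.top V
  | h₃ I P hI0 hP ih =>
    refine C163S.mul ?_ (ih hI0 ?_)
    · have hP' := Ideal.isPrime_of_prime hP
      obtain ⟨p, h1, h2, h4⟩ := c163_prime_mem hP' (Ideal.absNorm P)
        (by rw [Ne, Ideal.absNorm_eq_zero_iff]; exact hP.ne_zero) (Ideal.absNorm_mem P)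
      exact c163_prime_good h3 V h1 (h p h1 (by rw [map_mul]; exact h2.mul_right _)) hP' h4
    · intro p hp hd
      exact h p hp (by rw [map_mul]; exact hd.mul_left _)

theorem c163_step (h3 : Module.finrank ℚ K = 3) (V : Subgroup (ClassGroup (𝓞 K)))
    (θ : 𝓞 K) (h : θ ^ 3 = 11 * θ ^ 2 + 14 * θ + 1) {p : ℕ} (hp : p ≠ 0)
    (φ : 𝓞 K →+* ZMod p) (r : ZMod p) (hr : φ θ = r) (h5 : C163G V 5) (x y z : ℤ) (k : ℕ)
    (hφ : (x : ZMod p) + y * r + z * r ^ 2 = 0)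
    (hn : (x * ((x + z * 14) * (x + y * 11 + z * 135) - (y * 14 + z * 155) * (y + z * 11))
     - z * (y * (x + y * 11 + z * 135) - (y * 14 + z * 155) * z)
     + (y + z * 11) * (y * (y + z * 11) - (x + z * 14) * z)).natAbs = p * 5 ^ k) :
    C163S V (RingHom.ker φ) := by
  rw [← c163_absNorm h3 θ h] at hn
  obtain ⟨J, hJ⟩ : RingHom.ker φ ∣ Ideal.span {(x + y * θ + z * θ ^ 2 : 𝓞 K)} := by
    rw [Ideal.dvd_iff_le, Ideal.span_singleton_le_iff_mem, RingHom.mem_ker]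
    simp [hr, hφ]
  have h0 : (x + y * θ + z * θ ^ 2 : 𝓞 K) ≠ 0 := by
    intro h0
    rw [h0] at hn
    have : p * 5 ^ k ≠ 0 := by positivity
    rw [← hn] at this
    simp at this
  have hS : C163S V (RingHom.ker φ * J) := hJ ▸ C163S.principal V h0
  rw [hJ, map_mul, c163_norm_ker] at hn
  have hnJ := Nat.eq_of_mul_eq_mul_left (Nat.pos_of_ne_zero hp) hn
  refine hS.of_mul (c163_good_of_norm h3 V J ?_ ?_)
  · rintro rfl
    have : 5 ^ k ≠ 0 := by positivity
    rw [← hnJ] at this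
    simp at this
  · intro q hq hd
    rw [hnJ] at hd
    have := (Nat.prime_dvd_prime_iff_eq hq (by norm_num)).1 (hq.dvd_of_dvd_pow hd)
    rwa [this]

theorem c163_vac (θ : 𝓞 K) (h : θ ^ 3 = 11 * θ ^ 2 + 14 * θ + 1) (V : Subgroup (ClassGroup (𝓞 K)))
    (p : ℕ) (hv : ∀ r : ZMod p, r ^ 3 ≠ 11 * r ^ 2 + 14 * r + 1) : C163G V p := by
  intro φ
  refine absurd ?_ (hv (φ θ))
  rw [← map_pow, h]; simp [map_ofNat]

theorem c163_root (θ : 𝓞 K) (h : θ ^ 3 = 11 * θ ^ 2 + 14 * θ + 1) {p : ℕ} (φ : 𝓞 K →+* ZMod p) :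
    (φ θ) ^ 3 = 11 * (φ θ) ^ 2 + 14 * φ θ + 1 := by
  rw [← map_pow, h]; simp [map_ofNat]

theorem c163_all (h3 : Module.finrank ℚ K = 3) (V : Subgroup (ClassGroup (𝓞 K)))
    (θ : 𝓞 K) (h : θ ^ 3 = 11 * θ ^ 2 + 14 * θ + 1) (h5 : C163G V 5) : V = ⊤ := by
  have h13 : C163G V 13 := by
    intro φ
    rcases (show ∀ r : ZMod 13, r ^ 3 = 11 * r ^ 2 + 14 * r + 1 → r = 2 ∨ r = 4 ∨ r = 5 by decide)
      _ (c163_root θ h φ) with e | e | e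
    · exact c163_step h3 V θ h (by norm_num) φ _ e h5 (-2) 1 0 1 (by decide) (by norm_num)
    · exact c163_step h3 V θ h (by norm_num) φ _ e h5 1 3 0 1 (by decide) (by norm_num)
    · exact c163_step h3 V θ h (by norm_num) φ _ e h5 1 0 1 2 (by decide) (by norm_num)
  have h17 : C163G V 17 := by
    intro φ
    rcases (show ∀ r : ZMod 17, r ^ 3 = 11 * r ^ 2 + 14 * r + 1 → r = 5 ∨ r = 9 ∨ r = 14 by decide)
      _ (c163_root θ h φ) with e | e | e
    · exact c163_step h3 V θ h (by norm_num) φ _ e h5 2 3 0 1 (by decide) (by norm_num)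
    · exact c163_step h3 V θ h (by norm_num) φ _ e h5 (-1) 2 0 1 (by decide) (by norm_num)
    · exact c163_step h3 V θ h (by norm_num) φ _ e h5 3 1 0 1 (by decide) (by norm_num)
  have h23 : C163G V 23 := by
    intro φ
    rcases (show ∀ r : ZMod 23, r ^ 3 = 11 * r ^ 2 + 14 * r + 1 → r = 3 ∨ r = 14 ∨ r = 17 by decide)
      _ (c163_root θ h φ) with e | e | e
    · exact c163_step h3 V θ h (by norm_num) φ _ e h5 (-3) 1 0 1 (by decide) (by norm_num)
    · exact c163_step h3 V θ h (by norm_num) φ _ e h5 4 3 0 1 (by decide) (by norm_num)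
    · exact c163_step h3 V θ h (by norm_num) φ _ e h5 1 4 0 1 (by decide) (by norm_num)
  have h31 : C163G V 31 := by
    intro φ
    rcases (show ∀ r : ZMod 31, r ^ 3 = 11 * r ^ 2 + 14 * r + 1 → r = 11 ∨ r = 13 ∨ r = 18 by
      decide +kernel) _ (c163_root θ h φ) with e | e | e
    · exact c163_step h3 V θ h (by norm_num) φ _ e h5 1 3 1 1 (by decide) (by norm_num)
    · exact c163_step h3 V θ h (by norm_num) φ _ e h5 1 1 (-1) 1 (by decide) (by norm_num)
    · exact c163_step h3 V θ h (by norm_num) φ _ e h5 1 (-1) (-1) 1 (by decide) (by norm_num)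
  have hgood : ∀ p : ℕ, p.Prime → p ≤ 36 → C163G V p := by
    intro p hp hle
    interval_cases p <;> first
      | (exfalso; revert hp; norm_num; done)
      | assumption
      | exact c163_vac θ h V _ (by decide +kernel)
  rw [eq_top_iff]
  rintro C -
  obtain ⟨I, rfl, hI⟩ := c163_mink h3 θ h C
  have hI0 : (I : Ideal (𝓞 K)) ≠ 0 := nonZeroDivisors.coe_ne_zero I
  obtain ⟨h1, h2⟩ := c163_good_of_norm h3 V I hI0 (by
    intro p hp hd
    refine hgood p hp ((Nat.le_of_dvd (Nat.pos_of_ne_zero ?_) hd).trans hI)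
    rw [Ne, Ideal.absNorm_eq_zero_iff]; exact hI0)
  exact h2

theorem c163_sq (h3 : Module.finrank ℚ K = 3)
    (θ : 𝓞 K) (h : θ ^ 3 = 11 * θ ^ 2 + 14 * θ + 1)
    (φ : 𝓞 K →+* ZMod 5) (r : ZMod 5) (hr : φ θ = r) (x y z : ℤ)
    (hφ : (x : ZMod 5) + y * r + z * r ^ 2 = 0)
    (hu : ∀ s : ZMod 5, (x : ZMod 5) + y * s + z * s ^ 2 = 0 → s ^ 3 = 11 * s ^ 2 + 14 * s + 1 → s = r)
    (hn : (x * ((x + z * 14) * (x + y * 11 + z * 135) - (y * 14 + z * 155) * (y + z * 11))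
     - z * (y * (x + y * 11 + z * 135) - (y * 14 + z * 155) * z)
     + (y + z * 11) * (y * (y + z * 11) - (x + z * 14) * z)).natAbs = 5 * 5) :
    RingHom.ker φ * RingHom.ker φ = Ideal.span {(x + y * θ + z * θ ^ 2 : 𝓞 K)} := by
  rw [← c163_absNorm h3 θ h] at hn
  obtain ⟨J, hJ⟩ : RingHom.ker φ ∣ Ideal.span {(x + y * θ + z * θ ^ 2 : 𝓞 K)} := by
    rw [Ideal.dvd_iff_le, Ideal.span_singleton_le_iff_mem, RingHom.mem_ker]
    simp [hr, hφ]
  have hmem : (x + y * θ + z * θ ^ 2 : 𝓞 K) ∈ J := by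
    rw [← Ideal.span_singleton_le_iff_mem, hJ]
    exact Ideal.dvd_iff_le.1 (Dvd.intro_left _ rfl)
  rw [hJ]
  rw [hJ, map_mul, c163_norm_ker] at hn
  have hnJ := Nat.eq_of_mul_eq_mul_left (by norm_num) hn
  obtain ⟨ψ, rfl⟩ := c163_ker_of_norm (by norm_num) hnJ
  have : ψ = φ := by
    apply c163_hom_ext h3 θ h
    rw [hr]
    refine hu _ ?_ (c163_root θ h ψ)
    simpa [RingHom.mem_ker] using hmem
  rw [this]

theorem c163_five (h3 : Module.finrank ℚ K = 3)
    (θ : 𝓞 K) (h : θ ^ 3 = 11 * θ ^ 2 + 14 * θ + 1)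
    (φ₁ φ₂ φ₃ : 𝓞 K →+* ZMod 5) (h1 : φ₁ θ = 1) (h2 : φ₂ θ = 2) (h3' : φ₃ θ = 3) :
    RingHom.ker φ₃ * (RingHom.ker φ₁ * RingHom.ker φ₂) = Ideal.span {((5 : ℕ) : 𝓞 K)} := by
  have : Fact (Nat.Prime 5) := ⟨by norm_num⟩
  have hmax : ∀ φ : 𝓞 K →+* ZMod 5, (RingHom.ker φ).IsMaximal := fun φ =>
    RingHom.ker_isMaximal_of_surjective φ (ZMod.ringHom_surjective φ)
  have hne : ∀ φ ψ : 𝓞 K →+* ZMod 5, φ θ ≠ ψ θ → IsCoprime (RingHom.ker φ) (RingHom.ker ψ) := by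
    intro φ ψ hh
    rw [Ideal.isCoprime_iff_sup_eq]
    refine Ideal.IsMaximal.coprime_of_ne (hmax φ) (hmax ψ) ?_
    intro he
    apply hh
    obtain ⟨n, hn⟩ := ZMod.intCast_surjective (φ θ)
    have : θ - (n : 𝓞 K) ∈ RingHom.ker φ := by simp [RingHom.mem_ker, hn]
    rw [he, RingHom.mem_ker] at this
    simp [sub_eq_zero] at this
    rw [this, hn]
  have hd : ∀ φ : 𝓞 K →+* ZMod 5, RingHom.ker φ ∣ Ideal.span {((5 : ℕ) : 𝓞 K)} := by
    intro φ
    rw [Ideal.dvd_iff_le, Ideal.span_singleton_le_iff_mem, RingHom.mem_ker, map_natCast]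
    rfl
  have h12 := hne φ₁ φ₂ (by rw [h1, h2]; decide)
  have h13 := hne φ₃ φ₁ (by rw [h1, h3']; decide)
  have h23 := hne φ₃ φ₂ (by rw [h2, h3']; decide)
  obtain ⟨J, hJ⟩ := (h13.mul_right h23).mul_dvd (hd φ₃) (h12.mul_dvd (hd φ₁) (hd φ₂))
  have hN := c163_norm_nat h3 5
  rw [hJ, map_mul, map_mul, map_mul, c163_norm_ker, c163_norm_ker, c163_norm_ker] at hN
  have : Ideal.absNorm J = 1 := by omega
  rw [Ideal.absNorm_eq_one_iff] at this
  rw [hJ, this, Ideal.mul_top]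

end ideals

section units
open NumberField
variable {K : Type*} [Field K] [NumberField K]

theorem c163_zp {G : Type*} [Group G] (x : G) (hx : x ^ 2 = 1) (n : ℤ) :
    ∃ b : Bool, (if b then x else 1) = x ^ n := by
  have h2 : x ^ (2 : ℤ) = 1 := by exact_mod_cast hx
  rcases Int.even_or_odd' n with ⟨c, rfl | rfl⟩
  · exact ⟨false, by rw [zpow_mul, h2]; simp⟩
  · exact ⟨true, by rw [zpow_add, zpow_mul, h2]; simp⟩

theorem c163_index (h3 : Module.finrank ℚ K = 3) :
    (powMonoidHom 2 : (𝓞 K)ˣ →* (𝓞 K)ˣ).range.index ≤ 8 ∧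
    (powMonoidHom 2 : (𝓞 K)ˣ →* (𝓞 K)ˣ).range.index ≠ 0 := by
  set N := (powMonoidHom 2 : (𝓞 K)ˣ →* (𝓞 K)ˣ).range
  have hsq : ∀ x : (𝓞 K)ˣ ⧸ N, x ^ 2 = 1 := by
    intro x
    obtain ⟨y, rfl⟩ := QuotientGroup.mk_surjective x
    rw [← QuotientGroup.mk_pow, QuotientGroup.eq_one_iff]
    exact ⟨y, rfl⟩
  have hz : ∀ (x : (𝓞 K)ˣ ⧸ N) (n : ℤ), ∃ b : Bool, (if b then x else 1) = x ^ n := by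
    intro x n
    exact c163_zp x (hsq x) n
  have hr : Units.rank K ≤ 2 := by
    have h2 := InfinitePlace.card_add_two_mul_card_eq_rank K
    have h4 := InfinitePlace.card_eq_nrRealPlaces_add_nrComplexPlaces K
    rw [h3] at h2
    unfold Units.rank
    omega
  obtain ⟨ζ, hζ⟩ := IsCyclic.exists_generator (α := Units.torsion K)
  let s : Bool × (Fin (Units.rank K) → Bool) → (𝓞 K)ˣ ⧸ N := fun a =>
    (if a.1 then (QuotientGroup.mk (ζ : (𝓞 K)ˣ)) else 1) *
      ∏ i, (if a.2 i then (QuotientGroup.mk (Units.fundSystem K i)) else 1)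
  have hs : Function.Surjective s := by
    intro x
    obtain ⟨y, rfl⟩ := QuotientGroup.mk_surjective x
    obtain ⟨⟨t, e⟩, hte, -⟩ := Units.exist_unique_eq_mul_prod K y
    obtain ⟨k, rfl⟩ := Subgroup.mem_zpowers_iff.1 (hζ t)
    obtain ⟨b, hb⟩ := hz (QuotientGroup.mk (ζ : (𝓞 K)ˣ)) k
    choose c hc using fun i => hz (QuotientGroup.mk (Units.fundSystem K i)) (e i)
    refine ⟨(b, c), ?_⟩
    simp only [s, hb, hc]
    rw [hte]
    simp only [← QuotientGroup.mk'_apply, map_mul, map_prod, map_zpow, Subgroup.coe_zpow]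
  have hfin : Finite ((𝓞 K)ˣ ⧸ N) := Finite.of_surjective s hs
  constructor
  · have h1 := Nat.card_le_card_of_surjective s hs
    have h2 : Nat.card (Bool × (Fin (Units.rank K) → Bool)) = 2 * 2 ^ (Units.rank K) := by
      simp
    rw [h2] at h1
    have h4 : 2 ^ (Units.rank K) ≤ 2 ^ 2 := Nat.pow_le_pow_right (by norm_num) hr
    rw [Subgroup.index]
    omega
  · rw [Subgroup.index]
    exact Nat.card_ne_zero.2 ⟨inferInstance, hfin⟩

theorem c163_sq_of_char (h3 : Module.finrank ℚ K = 3) (F : (𝓞 K)ˣ →* ℤˣ × ℤˣ × ℤˣ)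
    (hF : Function.Surjective F) (u : (𝓞 K)ˣ) (hu : F u = 1) : ∃ v, u = v ^ 2 := by
  obtain ⟨h1, h2⟩ := c163_index h3
  set N := (powMonoidHom 2 : (𝓞 K)ˣ →* (𝓞 K)ˣ).range
  have hle : N ≤ F.ker := by
    rintro _ ⟨y, rfl⟩
    rw [MonoidHom.mem_ker, powMonoidHom_apply, map_pow]
    exact (show ∀ z : ℤˣ × ℤˣ × ℤˣ, z ^ 2 = 1 by decide) _
  have hk : F.ker.index = 8 := by
    rw [Subgroup.index_ker, MonoidHom.range_eq_top.2 hF]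
    simp [Nat.card_eq_fintype_card]
  have h4 := Subgroup.relIndex_mul_index hle
  rw [hk] at h4
  have : N.relIndex F.ker = 1 := by omega
  rw [Subgroup.relIndex_eq_one] at this
  obtain ⟨v, hv⟩ := this hu
  exact ⟨v, hv.symm⟩

/-- sign character -/
noncomputable def c163χ {q : ℕ} [Fact q.Prime] (φ : 𝓞 K →+* ZMod q) : (𝓞 K)ˣ →* ℤˣ :=
  (quadraticChar (ZMod q)).toUnitHom.comp (Units.map (φ : 𝓞 K →* ZMod q))

theorem c163χ_one {q : ℕ} [Fact q.Prime] (φ : 𝓞 K →+* ZMod q) (u : (𝓞 K)ˣ)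
    (h : IsSquare (φ u)) : c163χ φ u = 1 := by
  ext
  simp only [c163χ, MonoidHom.comp_apply, MulChar.coe_toUnitHom, Units.coe_map, Units.val_one]
  exact (quadraticChar_one_iff_isSquare (u.isUnit.map φ).ne_zero).2 h

theorem c163χ_neg {q : ℕ} [Fact q.Prime] (φ : 𝓞 K →+* ZMod q) (u : (𝓞 K)ˣ)
    (h : ¬ IsSquare (φ u)) : c163χ φ u = -1 := by
  ext
  simp only [c163χ, MonoidHom.comp_apply, MulChar.coe_toUnitHom, Units.coe_map, Units.val_neg,
    Units.val_one]
  exact quadraticChar_neg_one_iff_not_isSquare.2 h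

theorem c163_surj (F : (𝓞 K)ˣ →* ℤˣ × ℤˣ × ℤˣ) (a b c : (𝓞 K)ˣ)
    (ha : F a = (-1, 1, 1)) (hb : F b = (1, -1, 1)) (hc : F c = (1, 1, -1)) :
    Function.Surjective F := by
  rintro ⟨x, y, z⟩
  rcases Int.units_eq_one_or x with rfl | rfl <;> rcases Int.units_eq_one_or y with rfl | rfl <;>
    rcases Int.units_eq_one_or z with rfl | rfl
  · exact ⟨1, map_one F⟩
  · exact ⟨c, hc⟩
  · exact ⟨b, hb⟩
  · exact ⟨b * c, by rw [map_mul, hb, hc]; rfl⟩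
  · exact ⟨a, ha⟩
  · exact ⟨a * c, by rw [map_mul, ha, hc]; rfl⟩
  · exact ⟨a * b, by rw [map_mul, ha, hb]; rfl⟩
  · exact ⟨a * b * c, by rw [map_mul, map_mul, ha, hb, hc]; rfl⟩

theorem c163_χβ {q : ℕ} [Fact q.Prime] (φ : 𝓞 K →+* ZMod q) (u w : (𝓞 K)ˣ) (α β : 𝓞 K)
    (h : β = u * α ^ 2) (h0 : φ (w * β) ≠ 0) (h1 : IsSquare (φ (w * β))) : c163χ φ (w * u) = 1 := by
  apply c163χ_one
  have hα : φ α ≠ 0 := by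
    intro hα; apply h0; simp [h, hα]
  obtain ⟨c, hc⟩ := h1
  refine ⟨c / φ α, ?_⟩
  field_simp
  rw [sq c, ← hc, h]; simp; ring

theorem c163_nonprin (h3 : Module.finrank ℚ K = 3) (θ : 𝓞 K)
    (h : θ ^ 3 = 11 * θ ^ 2 + 14 * θ + 1)
    (φ₁ : 𝓞 K →+* ZMod 23) (φ₂ φ₃ : 𝓞 K →+* ZMod 13)
    (h1 : φ₁ θ = 3) (h2 : φ₂ θ = 2) (h3' : φ₃ θ = 4)
    {q : ℕ} (φ : 𝓞 K →+* ZMod q) (w : (𝓞 K)ˣ) (β : 𝓞 K)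
    (e1 : φ₁ (w * β) ≠ 0 ∧ IsSquare (φ₁ (w * β)))
    (e2 : φ₂ (w * β) ≠ 0 ∧ IsSquare (φ₂ (w * β)))
    (e3 : φ₃ (w * β) ≠ 0 ∧ IsSquare (φ₃ (w * β)))
    (e4 : ¬ IsSquare (φ (w * β)))
    (I : Ideal (𝓞 K)) (hI : I * I = Ideal.span {β}) : ¬ ∃ a, I = Ideal.span {a} := by
  have d1 : ¬ IsSquare (-1 : ZMod 23) := by decide
  have d2 : IsSquare (-1 : ZMod 13) := by decide
  have d3 : IsSquare (3 : ZMod 23) := by decide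
  have d4 : ¬ IsSquare (2 : ZMod 13) := by decide
  have d5 : IsSquare (4 : ZMod 13) := by decide
  have d6 : IsSquare (3 + 1 : ZMod 23) := by decide
  have d7 : IsSquare (2 + 1 : ZMod 13) := by decide
  have d8 : ¬ IsSquare (4 + 1 : ZMod 13) := by decide
  rintro ⟨α, rfl⟩
  have : Fact (Nat.Prime 23) := ⟨by norm_num⟩
  have : Fact (Nat.Prime 13) := ⟨by norm_num⟩
  rw [Ideal.span_singleton_mul_span_singleton, Ideal.span_singleton_eq_span_singleton] at hI
  obtain ⟨u, hu⟩ := hI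
  have hu' : β = u * α ^ 2 := by rw [← hu]; ring
  let F : (𝓞 K)ˣ →* ℤˣ × ℤˣ × ℤˣ := (c163χ φ₁).prod ((c163χ φ₂).prod (c163χ φ₃))
  let θ' : (𝓞 K)ˣ := ⟨θ, θ ^ 2 - 11 * θ - 14, by linear_combination h, by linear_combination h⟩
  let η' : (𝓞 K)ˣ := ⟨θ + 1, -(θ ^ 2 - 12 * θ - 2) , by linear_combination -h, by linear_combination -h⟩
  have hF : Function.Surjective F := by
    refine c163_surj F (-1) θ' η' ?_ ?_ ?_
    · refine Prod.ext (c163χ_neg _ _ ?_) (Prod.ext (c163χ_one _ _ ?_) (c163χ_one _ _ ?_))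
      · simp; exact d1
      · simp; exact d2
      · simp; exact d2
    · refine Prod.ext (c163χ_one _ _ ?_) (Prod.ext (c163χ_neg _ _ ?_) (c163χ_one _ _ ?_))
      · simp [θ', h1]; exact d3
      · simp [θ', h2]; exact d4
      · simp [θ', h3']; exact d5
    · refine Prod.ext (c163χ_one _ _ ?_) (Prod.ext (c163χ_one _ _ ?_) (c163χ_neg _ _ ?_))
      · simp [η', h1]; exact d6
      · simp [η', h2]; exact d7
      · simp [η', h3']; exact d8
  obtain ⟨v, hv⟩ := c163_sq_of_char h3 F hF (w * u) (Prod.ext (c163_χβ _ _ _ _ _ hu' e1.1 e1.2)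
    (Prod.ext (c163_χβ _ _ _ _ _ hu' e2.1 e2.2) (c163_χβ _ _ _ _ _ hu' e3.1 e3.2)))
  apply e4
  refine ⟨φ (v * α), ?_⟩
  have hv' : (w : 𝓞 K) * u = v ^ 2 := by exact_mod_cast congrArg Units.val hv
  rw [← map_mul]; congr 1
  rw [hu']; linear_combination α ^ 2 * hv'

theorem c163_main (h3 : Module.finrank ℚ K = 3) (θ : 𝓞 K)
    (h : θ ^ 3 = 11 * θ ^ 2 + 14 * θ + 1) :
    IsKleinFour (ClassGroup (𝓞 K)) := by
  obtain ⟨φ₁, h1⟩ := c163_hom h3 θ h 23 3 (by decide)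
  obtain ⟨φ₂, h2⟩ := c163_hom h3 θ h 13 2 (by decide)
  obtain ⟨φ₃, h3'⟩ := c163_hom h3 θ h 13 4 (by decide)
  obtain ⟨φ₄, h4⟩ := c163_hom h3 θ h 37 25 (by decide)
  obtain ⟨φ₅, h5⟩ := c163_hom h3 θ h 37 27 (by decide)
  obtain ⟨ψ₁, g1⟩ := c163_hom h3 θ h 5 1 (by decide)
  obtain ⟨ψ₂, g2⟩ := c163_hom h3 θ h 5 2 (by decide)
  let θ' : (𝓞 K)ˣ := ⟨θ, θ ^ 2 - 11 * θ - 14, by linear_combination h, by linear_combination h⟩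
  have s1 := c163_sq h3 θ h ψ₁ 1 g1 (-1) 1 0 (by decide) (by decide) (by norm_num)
  have s2 := c163_sq h3 θ h ψ₂ 2 g2 1 2 0 (by decide) (by decide) (by norm_num)
  have n1 := c163_nonprin h3 θ h φ₁ φ₂ φ₃ h1 h2 h3' φ₄ 1 _ (by simp [h1]; decide)
    (by simp [h2]; decide) (by simp [h3']; decide) (by simp [h4]; decide +kernel) _ s1
  have n2 := c163_nonprin h3 θ h φ₁ φ₂ φ₃ h1 h2 h3' φ₄ (-θ') _ (by simp [h1, θ', map_ofNat]; decide)
    (by simp [h2, θ', map_ofNat]; decide) (by simp [h3', θ', map_ofNat]; decide)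
    (by simp [h4, θ', map_ofNat]; decide +kernel) _ s2
  have s12 : (RingHom.ker ψ₁ * RingHom.ker ψ₂) * (RingHom.ker ψ₁ * RingHom.ker ψ₂) =
      Ideal.span {(((-1:ℤ):𝓞 K) + (1:ℤ)*θ + (0:ℤ)*θ^2) * (((1:ℤ):𝓞 K) + (2:ℤ)*θ + (0:ℤ)*θ^2)} := by
    rw [mul_mul_mul_comm, s1, s2, Ideal.span_singleton_mul_span_singleton]
  have n12 := c163_nonprin h3 θ h φ₁ φ₂ φ₃ h1 h2 h3' φ₅ (-θ') _ (by simp [h1, θ', map_ofNat]; decide)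
    (by simp [h2, θ', map_ofNat]; decide) (by simp [h3', θ', map_ofNat]; decide)
    (by simp [h5, θ', map_ofNat]; decide +kernel) _ s12
  have hker : ∀ ψ : 𝓞 K →+* ZMod 5, RingHom.ker ψ ∈ nonZeroDivisors (Ideal (𝓞 K)) := by
    intro ψ
    rw [mem_nonZeroDivisors_iff_ne_zero]
    intro h0
    have := c163_norm_ker ψ
    rw [h0] at this
    simp at this
  set a := ClassGroup.mk0 ⟨_, hker ψ₁⟩ with ha
  set b := ClassGroup.mk0 ⟨_, hker ψ₂⟩ with hb
  have toP : ∀ {I : Ideal (𝓞 K)}, (∃ x, I = Ideal.span {x}) ↔ I.IsPrincipal := fun {I} =>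
    ⟨fun ⟨x, hx⟩ => ⟨x, hx⟩, fun ⟨x, hx⟩ => ⟨x, hx⟩⟩
  rw [toP] at n1 n2 n12
  have a1 : a ≠ 1 := fun e => n1 ((ClassGroup.mk0_eq_one_iff (hker ψ₁)).1 e)
  have b1 : b ≠ 1 := fun e => n2 ((ClassGroup.mk0_eq_one_iff (hker ψ₂)).1 e)
  have ab1 : a * b ≠ 1 := fun e => n12
    ((ClassGroup.mk0_eq_one_iff (mul_mem (hker ψ₁) (hker ψ₂))).1 (by rw [← e, ha, hb, ← map_mul]; rfl))
  have aa : a * a = 1 := by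
    rw [ha, ← map_mul]
    exact (ClassGroup.mk0_eq_one_iff (mul_mem (hker ψ₁) (hker ψ₁))).2 ⟨_, s1⟩
  have bb : b * b = 1 := by
    rw [hb, ← map_mul]
    exact (ClassGroup.mk0_eq_one_iff (mul_mem (hker ψ₂) (hker ψ₂))).2 ⟨_, s2⟩
  have hV : Subgroup.closure {a, b} = ⊤ := by
    apply c163_all h3 _ θ h
    have k1 : C163S (Subgroup.closure {a, b}) (RingHom.ker ψ₁) :=
      ⟨hker ψ₁, Subgroup.subset_closure (by simp [ha])⟩
    have k2 : C163S (Subgroup.closure {a, b}) (RingHom.ker ψ₂) :=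
      ⟨hker ψ₂, Subgroup.subset_closure (by simp [hb])⟩
    intro ψ
    rcases (show ∀ r : ZMod 5, r ^ 3 = 11 * r ^ 2 + 14 * r + 1 → r = 1 ∨ r = 2 ∨ r = 3 by decide)
      _ (c163_root θ h ψ) with e | e | e
    · rw [c163_hom_ext h3 θ h ψ ψ₁ (by rw [e, g1])]; exact k1
    · rw [c163_hom_ext h3 θ h ψ ψ₂ (by rw [e, g2])]; exact k2
    · have := c163_five h3 θ h ψ₁ ψ₂ ψ g1 g2 e
      refine C163S.of_mul (J := RingHom.ker ψ₁ * RingHom.ker ψ₂) ?_ (k1.mul k2)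
      rw [this]
      exact C163S.principal _ (by exact_mod_cast (by norm_num : (5 : ℕ) ≠ 0))
  have hall : ∀ x : ClassGroup (𝓞 K), x = 1 ∨ x = a ∨ x = b ∨ x = a * b := by
    intro x
    have hx : x ∈ Subgroup.closure {a, b} := hV ▸ Subgroup.mem_top x
    rw [Subgroup.mem_closure_pair] at hx
    obtain ⟨m, n, rfl⟩ := hx
    have red : ∀ (y : ClassGroup (𝓞 K)), y * y = 1 → ∀ k : ℤ, y ^ k = 1 ∨ y ^ k = y := by
      intro y hy k
      have hy2 : y ^ (2 : ℤ) = 1 := by rw [zpow_two, hy]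
      rcases Int.even_or_odd' k with ⟨c, rfl | rfl⟩
      · left; rw [zpow_mul, hy2, one_zpow]
      · right; rw [zpow_add, zpow_mul, hy2, one_zpow, one_mul, zpow_one]
    rcases red a aa m with e | e <;> rcases red b bb n with e' | e' <;> rw [e, e'] <;> simp
  have hab : a ≠ b := fun e => ab1 (by rw [← e, aa])
  refine ⟨?_, ?_⟩
  · classical
    have hu : (Finset.univ : Finset (ClassGroup (𝓞 K))) = {1, a, b, a * b} := by
      ext x; simpa using hall x
    rw [Nat.card_eq_fintype_card, ← Finset.card_univ, hu]
    rw [Finset.card_insert_of_notMem, Finset.card_insert_of_notMem, Finset.card_insert_of_notMem,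
      Finset.card_singleton]
    · simpa using a1
    · simp [hab, b1]
    · simp [a1.symm, b1.symm, ab1.symm]
  · apply Nat.dvd_antisymm
    · rw [Monoid.exponent_dvd_iff_forall_pow_eq_one]
      intro x
      rcases hall x with rfl | rfl | rfl | rfl
      · simp
      · rw [sq, aa]
      · rw [sq, bb]
      · rw [sq, mul_mul_mul_comm, aa, bb, mul_one]
    · rw [← orderOf_eq_prime (p := 2) (by rw [sq, aa]) a1]
      exact Monoid.order_dvd_exponent a

end units


section periods

/-- cubes modulo 163 -/
def c163Q : Finset (ZMod 163) := Finset.univ.filter fun a => a ^ 54 = 1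

/-- cubic residue class modulo 163 -/
def c163c (x : ZMod 163) : Fin 4 :=
  if x = 0 then 0 else if x ^ 54 = 1 then 1 else if x ^ 54 = 104 then 2 else 3

theorem c163_prime : Nat.Prime 163 := by norm_num

variable {E : Type*} [Field E]

/-- Gauss period -/
def c163η (e : AddChar (ZMod 163) E) (x : ZMod 163) : E := ∑ a ∈ c163Q, e (a * x)

theorem c163η_mul (e : AddChar (ZMod 163) E) (s x : ZMod 163) (hs : s ^ 54 = 1) :
    c163η e (s * x) = c163η e x := by
  have hs' : s ^ 53 * s = 1 := by rw [← hs]; ring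
  unfold c163η
  refine Finset.sum_bij' (fun a _ => a * s) (fun a _ => a * s ^ 53) ?_ ?_ ?_ ?_ ?_
  · intro a ha
    simp only [c163Q, Finset.mem_filter, Finset.mem_univ, true_and] at ha ⊢
    rw [mul_pow, ha, hs, one_mul]
  · intro a ha
    simp only [c163Q, Finset.mem_filter, Finset.mem_univ, true_and] at ha ⊢
    rw [mul_pow, ha, ← pow_mul, mul_comm 53, pow_mul, hs, one_pow, one_mul]
  · intro a _
    linear_combination a * hs'
  · intro a _
    linear_combination a * hs'
  · intro a _
    rw [mul_assoc]

theorem c163c_spec : ∀ x : ZMod 163, (c163c x = 0 → x = 0) ∧ (c163c x = 1 → x ^ 54 = 1) ∧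
    (c163c x = 2 → (x * 82) ^ 54 = 1) ∧ (c163c x = 3 → (x * 41) ^ 54 = 1) := by
  decide +kernel

theorem c163Q_card : c163Q.card = 54 := by decide +kernel

theorem c163η_eq (e : AddChar (ZMod 163) E) (x : ZMod 163) :
    c163η e x = ![54, c163η e 1, c163η e 2, c163η e 4] (c163c x) := by
  obtain ⟨h0, h1, h2, h3⟩ := c163c_spec x
  generalize c163c x = j at *
  fin_cases j
  · rw [h0 rfl]
    simp [c163η, c163Q_card]
  · have := c163η_mul e x 1 (h1 rfl)
    simpa using this
  · have := c163η_mul e _ 2 (h2 rfl)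
    rw [show x * 82 * 2 = x by
      rw [mul_assoc, show (82 * 2 : ZMod 163) = 1 by decide, mul_one]] at this
    simpa using this
  · have := c163η_mul e _ 4 (h3 rfl)
    rw [show x * 41 * 4 = x by
      rw [mul_assoc, show (41 * 4 : ZMod 163) = 1 by decide, mul_one]] at this
    simpa using this

theorem c163_count (s : Finset (ZMod 163)) (f : ZMod 163 → ZMod 163) (v : Fin 4 → E) :
    ∑ t ∈ s, v (c163c (f t)) = ∑ j, ((s.filter fun t => c163c (f t) = j).card : E) * v j := by
  rw [← Finset.sum_fiberwise s (fun t => c163c (f t))]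
  refine Finset.sum_congr rfl fun j _ => ?_
  rw [Finset.sum_congr rfl (g := fun _ => v j), Finset.sum_const, nsmul_eq_mul]
  intro t ht
  rw [(Finset.mem_filter.1 ht).2]

theorem c163_prod (e : AddChar (ZMod 163) E) (x y : ZMod 163) :
    c163η e x * c163η e y = ∑ t ∈ c163Q, c163η e (x + t * y) := by
  have h1 : c163η e x * c163η e y = ∑ a ∈ c163Q, e (a * x) * c163η e (a * y) := by
    rw [c163η, Finset.sum_mul]
    refine Finset.sum_congr rfl fun a ha => ?_
    rw [c163η_mul e a y (Finset.mem_filter.1 ha).2]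
  rw [h1]
  unfold c163η
  simp_rw [Finset.mul_sum]
  rw [Finset.sum_comm]
  refine Finset.sum_congr rfl fun t _ => Finset.sum_congr rfl fun a _ => ?_
  rw [← AddChar.map_add_eq_mul]
  congr 1; ring

theorem c163_prod' (e : AddChar (ZMod 163) E) (x y : ZMod 163) :
    c163η e x * c163η e y =
      ((c163Q.filter fun t => c163c (x + t * y) = 0).card : E) * 54 +
      ((c163Q.filter fun t => c163c (x + t * y) = 1).card : E) * c163η e 1 +
      ((c163Q.filter fun t => c163c (x + t * y) = 2).card : E) * c163η e 2 +
      ((c163Q.filter fun t => c163c (x + t * y) = 3).card : E) * c163η e 4 := by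
  rw [c163_prod, Finset.sum_congr rfl fun t _ => c163η_eq e (x + t * y),
    c163_count c163Q (fun t => x + t * y), Fin.sum_univ_four]
  rfl

theorem c163_sum [CharZero E] (e : AddChar (ZMod 163) E) (he : e.IsPrimitive) :
    c163η e 1 + c163η e 2 + c163η e 4 = -1 := by
  have h1 : ∑ x : ZMod 163, c163η e x = 0 := by
    unfold c163η
    rw [Finset.sum_comm]
    refine Finset.sum_eq_zero fun a ha => ?_
    have := AddChar.sum_mulShift a he
    rw [if_neg] at this
    · simpa [mul_comm] using this
    · rintro rfl
      exact absurd (Finset.mem_filter.1 ha).2 (by decide)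
  rw [Finset.sum_congr rfl fun t _ => c163η_eq e t, c163_count _ (fun t => t),
    Fin.sum_univ_four,
    show (Finset.univ.filter fun t => c163c t = 0).card = 1 by decide +kernel,
    show (Finset.univ.filter fun t => c163c t = 1).card = 54 by decide +kernel,
    show (Finset.univ.filter fun t => c163c t = 2).card = 54 by decide +kernel,
    show (Finset.univ.filter fun t => c163c t = 3).card = 54 by decide +kernel] at h1
  simp at h1
  linear_combination h1 / 54

theorem c163_cubic [CharZero E] (e : AddChar (ZMod 163) E) (he : e.IsPrimitive) :
    c163η e 1 ^ 3 + c163η e 1 ^ 2 - 54 * c163η e 1 - 169 = 0 := by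
  have hs := c163_sum e he
  have e1 := c163_prod' e 1 1
  have e2 := c163_prod' e 1 2
  have e3 := c163_prod' e 1 4
  rw [show (c163Q.filter fun t => c163c (1 + t * 1) = 0).card = 1 by decide +kernel,
    show (c163Q.filter fun t => c163c (1 + t * 1) = 1).card = 20 by decide +kernel,
    show (c163Q.filter fun t => c163c (1 + t * 1) = 2).card = 17 by decide +kernel,
    show (c163Q.filter fun t => c163c (1 + t * 1) = 3).card = 16 by decide +kernel] at e1
  rw [show (c163Q.filter fun t => c163c (1 + t * 2) = 0).card = 0 by decide +kernel,
    show (c163Q.filter fun t => c163c (1 + t * 2) = 1).card = 17 by decide +kernel,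
    show (c163Q.filter fun t => c163c (1 + t * 2) = 2).card = 16 by decide +kernel,
    show (c163Q.filter fun t => c163c (1 + t * 2) = 3).card = 21 by decide +kernel] at e2
  rw [show (c163Q.filter fun t => c163c (1 + t * 4) = 0).card = 0 by decide +kernel,
    show (c163Q.filter fun t => c163c (1 + t * 4) = 1).card = 16 by decide +kernel,
    show (c163Q.filter fun t => c163c (1 + t * 4) = 2).card = 21 by decide +kernel,
    show (c163Q.filter fun t => c163c (1 + t * 4) = 3).card = 17 by decide +kernel] at e3
  push_cast at e1 e2 e3
  linear_combination c163η e 1 * e1 + 17 * e2 + 16 * e3 + 21 * e1 + 965 * hs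

end periods

theorem c163_pow_card {G : Type*} [Group G] (H : Subgroup G) (n : ℕ) (h : Nat.card H = n)
    (σ : G) (hσ : σ ∈ H) : σ ^ n = 1 := by
  have := pow_card_eq_one' (x := (⟨σ, hσ⟩ : H))
  rw [h] at this
  exact congrArg Subtype.val this

theorem c163_lift {K : Type*} [Field K] [NumberField K] (t : K)
    (h : t ^ 3 = 11 * t ^ 2 + 14 * t + 1) :
    ∃ θ : NumberField.RingOfIntegers K, θ ^ 3 = 11 * θ ^ 2 + 14 * θ + 1 := by
  have hint : IsIntegral ℤ t := by
    refine ⟨X ^ 3 - 11 * X ^ 2 - 14 * X - 1, by monicity!, ?_⟩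
    simp
    linear_combination h
  refine ⟨⟨t, hint⟩, ?_⟩
  apply (FaithfulSMul.algebraMap_injective (NumberField.RingOfIntegers K) K)
  simp only [map_add, map_mul, map_pow, map_ofNat, map_one]
  exact h

theorem c163_theta (L : IntermediateField ℚ (CyclotomicField 163 ℚ))
    (hL : Module.finrank ℚ L = 3) :
    ∃ θ : NumberField.RingOfIntegers L, θ ^ 3 = 11 * θ ^ 2 + 14 * θ + 1 := by
  have : NeZero (163 : ℕ) := ⟨by norm_num⟩
  have : Fact (Nat.Prime 163) := ⟨c163_prime⟩
  have : IsCyclotomicExtension {163} ℚ (CyclotomicField 163 ℚ) :=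
    CyclotomicField.isCyclotomicExtension _ _
  have : IsGalois ℚ (CyclotomicField 163 ℚ) := IsCyclotomicExtension.isGalois {163} ℚ _
  have hζ := IsCyclotomicExtension.zeta_spec 163 ℚ (CyclotomicField 163 ℚ)
  set ζ := IsCyclotomicExtension.zeta 163 ℚ (CyclotomicField 163 ℚ)
  have hprim := AddChar.zmodChar_primitive_of_primitive_root 163 hζ
  set e := AddChar.zmodChar 163 ((IsPrimitiveRoot.iff_def ζ 163).mp hζ).left with he
  set A := c163η e 1 with hA
  have hcub := c163_cubic e hprim
  rw [← hA] at hcub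
  have hdeg : Module.finrank ℚ (CyclotomicField 163 ℚ) = 162 := by
    rw [IsCyclotomicExtension.finrank (n := 163) (CyclotomicField 163 ℚ)
      (cyclotomic.irreducible_rat (by norm_num)), Nat.totient_prime c163_prime]
  have hdeg2 : Module.finrank L (CyclotomicField 163 ℚ) = 54 := by
    have := Module.finrank_mul_finrank ℚ L (CyclotomicField 163 ℚ)
    rw [hL, hdeg] at this
    omega
  have hcard := IsGalois.card_fixingSubgroup_eq_finrank L
  rw [hdeg2] at hcard
  have hmem : A ∈ L := by
    rw [← IsGalois.fixedField_fixingSubgroup L, IntermediateField.mem_fixedField_iff]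
    intro σ hσ
    have h54 : σ ^ 54 = 1 := by
      exact c163_pow_card _ _ hcard σ hσ
    set m := hζ.autToPow ℚ σ with hm
    have hm54 : (m : ZMod 163) ^ 54 = 1 := by
      have : m ^ 54 = 1 := by rw [hm, ← map_pow, h54, map_one]
      rw [← Units.val_pow_eq_pow_val, this, Units.val_one]
    have hsp : ζ ^ (m : ZMod 163).val = σ ζ := hζ.autToPow_spec ℚ σ
    have hσe : ∀ a, σ (e a) = e (a * m) := by
      intro a
      rw [he, AddChar.zmodChar_apply, map_pow, ← hsp, ← pow_mul, AddChar.zmodChar_apply]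
      rw [ZMod.val_mul, mul_comm]
      exact pow_eq_pow_mod _ hζ.pow_eq_one
    have := c163η_mul e m 1 hm54
    rw [hA, ← this]
    conv_lhs => rw [this]
    unfold c163η
    rw [map_sum]
    simp [hσe]
  have ha : (⟨A, hmem⟩ : L) ^ 3 + (⟨A, hmem⟩ : L) ^ 2 - 54 * (⟨A, hmem⟩ : L) - 169 = 0 := by
    apply (algebraMap L (CyclotomicField 163 ℚ)).injective
    simp only [map_sub, map_add, map_mul, map_pow, map_ofNat, map_zero]
    exact hcub
  exact c163_lift ((⟨A, hmem⟩ : L) + 4) (by linear_combination ha)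

/-- Let `ℓ = 163` and let `L` be the unique degree-3 intermediate field of `ℚ(ζ_ℓ)/ℚ`.
Then the class number of `L` is `4` and the ideal class group of `L` is isomorphic to
`(ℤ/2ℤ) × (ℤ/2ℤ)`. -/
theorem classGroup_of_cubic_subfield_163
    (L : IntermediateField ℚ (CyclotomicField 163 ℚ)) (hL : Module.finrank ℚ L = 3) :
    NumberField.classNumber L = 4 ∧
    Nonempty (ClassGroup (NumberField.RingOfIntegers L) ≃*
      Multiplicative (ZMod 2 × ZMod 2)) := by
  obtain ⟨θ, h⟩ := c163_theta L hL
  have := c163_main hL θ h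
  refine ⟨?_, IsKleinFour.nonempty_mulEquiv⟩
  rw [NumberField.classNumber, ← Nat.card_eq_fintype_card]
  exact IsKleinFour.card_four
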